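/- A topological space X is a uniformizable Alexandroff space if and only if the quotient space X/ℜ is discrete, where ℜ is the equivalence relation on X defined by a ℜ b ⟺ V(a) = V(b), and X/ℜ carries the quotient topology under the natural quotient map π : X → X/ℜ. -/

import Mathlib

open Set

variable {X : Type*}

/-- `V a` : the intersection of all open neighbourhoods of `a`. -/
def V [TopologicalSpace X] (a : X) : Set X :=
  ⋂₀ {U : Set X | IsOpen U ∧ a ∈ U}

/-- A topological space is uniformizable if its topology is induced by some
uniform structure. -/
def Uniformizable (X : Type*) [t : TopologicalSpace X] : Prop :=
  ∃ u : UniformSpace X, u.toTopologicalSpace = t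

/-- The equivalence relation `ℜ` on `X` defined by `a ℜ b ↔ V a = V b`. -/
def vSetoid (X : Type*) [TopologicalSpace X] : Setoid X :=
  ⟨fun a b => V a = V b, ⟨fun _ => rfl, Eq.symm, Eq.trans⟩⟩

theorem mem_V_iff_specializes [TopologicalSpace X] {a b : X} : b ∈ V a ↔ b ⤳ a := by
  simp [V, specializes_iff_forall_open]

theorem V_eq_V_iff_inseparable [TopologicalSpace X] {a b : X} :
    V a = V b ↔ Inseparable a b := by
  refine ⟨fun h => ?_, fun h => ?_⟩
  · have hab : a ∈ V b := h ▸ mem_V_iff_specializes.2 specializes_rfl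
    have hba : b ∈ V a := h ▸ mem_V_iff_specializes.2 specializes_rfl
    exact (mem_V_iff_specializes.1 hab).antisymm (mem_V_iff_specializes.1 hba)
  · ext c
    rw [mem_V_iff_specializes, mem_V_iff_specializes]
    exact ⟨fun hc => hc.trans h.specializes, fun hc => hc.trans h.specializes'⟩

theorem discreteTopology_quotient_vSetoid_iff [TopologicalSpace X] :
    DiscreteTopology (Quotient (vSetoid X)) ↔ ∀ a : X, IsOpen {b | Inseparable b a} := by
  have preimage_mk (a : X) :
      Quotient.mk (vSetoid X) ⁻¹' {Quotient.mk (vSetoid X) a} = {b | Inseparable b a} := by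
    ext b
    exact Quotient.eq.trans V_eq_V_iff_inseparable
  rw [discreteTopology_iff_isOpen_singleton, Quotient.forall]
  refine forall_congr' fun a => ?_
  rw [← preimage_mk]
  exact isQuotientMap_quot_mk.isOpen_preimage.symm

theorem isInducing_mk_vSetoid [TopologicalSpace X] :
    Topology.IsInducing (Quotient.mk (vSetoid X)) := by
  refine ⟨le_antisymm continuous_quot_mk.le_induced fun U hU => ?_⟩
  have preimage_image : Quotient.mk (vSetoid X) ⁻¹' (Quotient.mk (vSetoid X) '' U) = U := by
    refine (subset_preimage_image _ _).antisymm' ?_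
    rintro b ⟨a, ha, hab⟩
    exact ((V_eq_V_iff_inseparable.1 (Quotient.exact hab)).mem_open_iff hU).1 ha
  refine isOpen_induced_iff.2 ⟨_, ?_, preimage_image⟩
  exact isQuotientMap_quot_mk.isOpen_preimage.1 (preimage_image.symm ▸ hU)

/-- `X` is a uniformizable Alexandroff space iff the quotient space `X/ℜ`
(with the quotient topology) is discrete, where `a ℜ b ↔ V a = V b`. -/
theorem stmt8 [TopologicalSpace X] :
    ((∀ a : X, IsOpen (V a)) ∧ Uniformizable X) ↔
      DiscreteTopology (Quotient (vSetoid X)) := by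
  constructor
  · rintro ⟨hV, u, rfl⟩
    refine discreteTopology_quotient_vSetoid_iff.2 fun a => ?_
    convert hV a using 1
    ext b
    exact specializes_iff_inseparable.symm.trans mem_V_iff_specializes.symm
  · intro hd
    have hopen := discreteTopology_quotient_vSetoid_iff.1 hd
    refine ⟨fun a => ?_, UniformSpace.comap (Quotient.mk (vSetoid X)) ⊥, ?_⟩
    · convert hopen a using 1
      ext b
      rw [mem_V_iff_specializes]
      exact ⟨fun h => h.mem_open (hopen a) (Inseparable.refl a), Inseparable.specializes⟩
    · refine Eq.trans ?_ isInducing_mk_vSetoid.eq_induced.symm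
      rw [hd.eq_bot]
      rfl
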